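/- Suppose G is a locally finite bipartite Borel graph on a Polish space X with bipartition {B₀, B₁} (the sets B₀, B₁ need not be Borel), and there exists ε > 0 such that for every finite set F with F ⊆ B₀ or F ⊆ B₁ one has |N_G(F)| ≥ (1 + ε)·|F|. Then there is a comeager G-invariant Borel set A ⊆ X such that the induced graph G ↾ A has a Borel perfect matching. -/

import Mathlib

/-- `N_G(F)`: the set of neighbors of points of `F` that are not contained in `F`. -/
def graphNbhd {X : Type*} (G : SimpleGraph X) (F : Set X) : Set X :=
  {y | y ∉ F ∧ ∃ x ∈ F, G.Adj x y}

/-- `M` is a perfect matching of the induced graph `G ↾ A`, viewed as a symmetric set of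
edges (ordered pairs) such that every vertex of `A` is incident to exactly one edge of `M`. -/
def IsPerfectMatchingOn {X : Type*} (G : SimpleGraph X) (A : Set X) (M : Set (X × X)) : Prop :=
  (∀ p ∈ M, p.1 ∈ A ∧ p.2 ∈ A ∧ G.Adj p.1 p.2) ∧
  (∀ x y : X, (x, y) ∈ M ↔ (y, x) ∈ M) ∧
  (∀ x ∈ A, ∃! y : X, (x, y) ∈ M)

section aux
open Set MeasureTheory

def BSep {α : Type*} [MeasurableSpace α] (A : ℕ → Set α) : Prop :=
  ∃ B : ℕ → Set α, (∀ n, MeasurableSet (B n)) ∧ (∀ n, A n ⊆ B n) ∧ ⋂ n, B n = ∅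

lemma BSep.step {α ι : Type*} [Countable ι] [MeasurableSpace α] (A : ℕ → Set α) (m : ℕ)
    (C : ι → ℕ → Set α) (hC : ∀ i, BSep (C i)) (h1 : A m ⊆ ⋃ i, C i m)
    (h2 : ∀ n, n ≠ m → ∀ i, A n ⊆ C i n) : BSep A := by
  choose B hB hCB hBe using hC
  refine ⟨fun n => if n = m then ⋃ i, B i n else ⋂ i, B i n, ?_, ?_, ?_⟩
  · intro n
    by_cases h : n = m
    · simp only [h, if_true]; exact MeasurableSet.iUnion fun i => hB i m
    · simp only [h, if_false]; exact MeasurableSet.iInter fun i => hB i n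
  · intro n
    by_cases h : n = m
    · simp only [h, if_true]; exact h1.trans (iUnion_mono fun i => hCB i m)
    · simp only [h, if_false]; exact subset_iInter fun i => (h2 n h i).trans (hCB i n)
  · rw [eq_empty_iff_forall_notMem]
    intro x hx
    rw [mem_iInter] at hx
    have hm := hx m
    simp only [if_true, mem_iUnion] at hm
    obtain ⟨i, hi⟩ := hm
    have : x ∈ ⋂ n, B i n := by
      rw [mem_iInter]
      intro n
      by_cases h : n = m
      · rw [h]; exact hi
      · have := hx n
        simp only [h, if_false, mem_iInter] at this
        exact this i
    rw [hBe i] at this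
    exact this

lemma novikov {α : Type*} [TopologicalSpace α] [T2Space α] [MeasurableSpace α]
    [OpensMeasurableSpace α] (A : ℕ → Set α) (hA : ∀ n, AnalyticSet (A n))
    (hAe : ⋂ n, A n = ∅) : BSep A := by
  by_cases hne : ∃ n, A n = ∅
  · obtain ⟨n, hn⟩ := hne
    refine ⟨fun k => if k = n then ∅ else univ, ?_, ?_, ?_⟩
    · intro k; by_cases h : k = n <;> simp [h]
    · intro k; by_cases h : k = n <;> simp [h, hn]
    · rw [eq_empty_iff_forall_notMem]
      intro x hx
      have := mem_iInter.1 hx n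
      simp at this
  push Not at hne
  have hA' : ∀ n, ∃ f : (ℕ → ℕ) → α, Continuous f ∧ range f = A n := by
    intro n
    have hAn := hA n
    rw [AnalyticSet] at hAn
    rcases hAn with h | h
    · exact absurd h (hne n).ne_empty
    · exact h
  choose f hf hfA using hA'
  let g : ℕ → (ℕ → ℕ) → α := fun n z => f n (fun j => z (Nat.pair n j))
  have hg : ∀ n, Continuous (g n) := fun n => (hf n).comp (by fun_prop)
  let fam : (ℕ → ℕ) → ℕ → ℕ → Set α := fun z t n => g n '' PiNat.cylinder z t
  by_contra hcon
  have h0 : ∀ z, ¬ BSep (fam z 0) := by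
    rintro z ⟨B, h1, h2, h3⟩
    refine hcon ⟨B, h1, fun n => subset_trans ?_ (h2 n), h3⟩
    rw [← hfA n]
    rintro _ ⟨w, rfl⟩
    refine ⟨fun m => w (Nat.unpair m).2, by simp, ?_⟩
    simp [g]
  have hstep : ∀ z t, ¬ BSep (fam z t) → ∃ i, ¬ BSep (fam (Function.update z t i) (t+1)) := by
    intro z t hz
    by_contra! hall
    refine hz (BSep.step _ (Nat.unpair t).1 _ hall ?_ ?_)
    · simp only [fam]
      rw [← image_iUnion, PiNat.iUnion_cylinder_update z t]
    · rintro n hn i _ ⟨z', hz', rfl⟩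
      refine ⟨Function.update z' t i, ?_, ?_⟩
      · intro k hk
        by_cases hkt : k = t
        · subst hkt; simp
        · rw [Function.update_of_ne hkt, Function.update_of_ne hkt]
          exact hz' k (by omega)
      · simp only [g]
        congr 1
        funext j
        rw [Function.update_of_ne]
        rintro rfl
        simp at hn
  choose! pick hpick using hstep
  let zs : ℕ → (ℕ → ℕ) := fun t => Nat.rec (fun _ => 0) (fun t z => Function.update z t (pick z t)) t
  have zs_succ : ∀ t, zs (t+1) = Function.update (zs t) t (pick (zs t) t) := fun t => rfl
  have hzs : ∀ t, ¬ BSep (fam (zs t) t) := by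
    intro t
    induction t with
    | zero => exact h0 _
    | succ t ih => rw [zs_succ]; exact hpick _ _ ih
  let z : ℕ → ℕ := fun t => zs (t+1) t
  have hz : ∀ t m, m < t → zs t m = z m := by
    intro t
    induction t with
    | zero => intro m hm; omega
    | succ t ih =>
      intro m hm
      rcases Nat.lt_succ_iff_lt_or_eq.1 hm with h | h
      · rw [zs_succ, Function.update_of_ne (by omega), ih m h]
      · subst h; rfl
  have hzz : ∀ t, ¬ BSep (fam z t) := by
    intro t
    have : PiNat.cylinder (zs t) t = PiNat.cylinder z t := by
      rw [← PiNat.mem_cylinder_iff_eq]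
      intro i hi
      exact hz t i hi
    have h2 := hzs t
    simp only [fam] at h2 ⊢
    rwa [this] at h2
  have hloc : ∀ n (U : Set α), IsOpen U → g n z ∈ U → ∃ t, ∀ s, t ≤ s → fam z s n ⊆ U := by
    intro n U hU hz
    have := (PiNat.isTopologicalBasis_cylinders (fun _ : ℕ => ℕ)).mem_nhds_iff.1
      ((hg n).continuousAt.preimage_mem_nhds (hU.mem_nhds hz))
    obtain ⟨_, ⟨x, t, rfl⟩, hzx, hsub⟩ := this
    rw [PiNat.mem_cylinder_iff_eq] at hzx
    refine ⟨t, fun s hs => ?_⟩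
    rintro _ ⟨w, hw, rfl⟩
    apply hsub
    rw [← hzx]
    exact PiNat.cylinder_anti z hs hw
  have : ∃ n, g n z ≠ g 0 z := by
    by_contra! hall
    have : g 0 z ∈ ⋂ n, A n := by
      rw [mem_iInter]; intro n; rw [← hall n, ← hfA n]; exact mem_range_self _
    rw [hAe] at this; exact this
  obtain ⟨n, hn⟩ := this
  have hn0 : n ≠ 0 := by rintro rfl; exact hn rfl
  obtain ⟨u, v, hu, hv, hnu, h0v, huv⟩ := t2_separation hn
  obtain ⟨t1, ht1⟩ := hloc n u hu hnu
  obtain ⟨t2, ht2⟩ := hloc 0 v hv h0v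
  refine hzz (max t1 t2) ⟨fun k => if k = n then u else if k = 0 then v else univ, ?_, ?_, ?_⟩
  · intro k
    dsimp only
    split_ifs
    exacts [hu.measurableSet, hv.measurableSet, MeasurableSet.univ]
  · intro k
    dsimp only
    split_ifs with h1 h2
    · subst h1; exact ht1 _ (le_max_left _ _)
    · subst h2; exact ht2 _ (le_max_right _ _)
    · exact subset_univ _
  · rw [eq_empty_iff_forall_notMem]
    intro x hx
    rw [mem_iInter] at hx
    have a := hx n
    have b := hx 0
    simp only [if_true, hn0.symm, if_false] at a b
    exact (disjoint_left.1 huv) a b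

/-- k distinct points in the section -/
def topk {X Y : Type*} (e : Y → ℝ) (P : Set (X × Y)) (k : ℕ) : Set (X × (Fin k → Y)) :=
  {q | StrictMono (fun i => e (q.2 i)) ∧ ∀ i, (q.1, q.2 i) ∈ P}

lemma topk_meas {X Y : Type*} [MeasurableSpace X] [MeasurableSpace Y] {e : Y → ℝ}
    (he : Measurable e) {P : Set (X × Y)} (hP : MeasurableSet P) (k : ℕ) :
    MeasurableSet (topk e P k) := by
  have : topk e P k = (⋂ i : Fin k, ⋂ j : Fin k, {q | i < j → e (q.2 i) < e (q.2 j)}) ∩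
      ⋂ i : Fin k, {q | (q.1, q.2 i) ∈ P} := by
    ext q
    simp only [topk, mem_ofPred_eq, mem_inter_iff, mem_iInter, StrictMono]
  rw [this]
  refine MeasurableSet.inter (MeasurableSet.iInter fun i => MeasurableSet.iInter fun j => ?_)
    (MeasurableSet.iInter fun i => ?_)
  · by_cases h : i < j
    · simp only [h, true_imp_iff]
      exact measurableSet_lt (by fun_prop) (by fun_prop)
    · simp [h]
  · exact hP.preimage (f := fun q : X × (Fin k → Y) => (q.1, q.2 i)) (by fun_prop)

lemma topk_exists {Y : Type*} {e : Y → ℝ} (he : Function.Injective e) (S : Finset Y) :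
    ∃ v : Fin S.card → Y, StrictMono (fun i => e (v i)) ∧ ∀ i, v i ∈ S := by
  classical
  have hc : (S.image e).card = S.card := Finset.card_image_of_injective _ he
  have : ∀ i, ∃ y ∈ S, e y = (S.image e).orderEmbOfFin hc i := fun i =>
    Finset.mem_image.1 (Finset.orderEmbOfFin_mem _ hc i)
  choose v hv hve using this
  refine ⟨v, ?_, hv⟩
  simp only [hve]
  exact ((S.image e).orderEmbOfFin hc).strictMono

lemma bdd_LN {X Y : Type*} [MeasurableSpace X] [StandardBorelSpace X] [MeasurableSpace Y]
    [StandardBorelSpace Y] (k : ℕ) (P : Set (X × Y)) (hP : MeasurableSet P)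
    (hk : ∀ x (S : Finset Y), (∀ y ∈ S, (x, y) ∈ P) → S.card ≤ k) :
    MeasurableSet {x | ∃ y, (x, y) ∈ P} := by
  classical
  induction k generalizing P with
  | zero =>
    convert MeasurableSet.empty using 1
    rw [eq_empty_iff_forall_notMem]
    rintro x ⟨y, hy⟩
    have := hk x {y} (by simpa using hy)
    simp at this
  | succ k ih =>
    obtain ⟨e, he⟩ := MeasureTheory.exists_measurableEmbedding_real Y
    have hinj := he.injective
    let T : Set X := Prod.fst '' topk e P (k+1)
    have hrange : ∀ x v, (x, v) ∈ topk e P (k+1) → ∀ y, (x, y) ∈ P → y ∈ range v := by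
      intro x v hv y hy
      by_contra hn
      have hvi : Function.Injective v := fun i j h => hv.1.injective (by simp [h])
      have := hk x (insert y (Finset.univ.image v)) (by
        intro y' hy'
        simp only [Finset.mem_insert, Finset.mem_image, Finset.mem_univ, true_and] at hy'
        rcases hy' with rfl | ⟨i, rfl⟩
        · exact hy
        · exact hv.2 i)
      rw [Finset.card_insert_of_notMem (by simpa using hn),
        Finset.card_image_of_injective _ hvi] at this
      simp at this
    have hT : MeasurableSet T := by
      refine (topk_meas he.measurable hP (k+1)).image_of_measurable_injOn measurable_fst ?_
      rintro ⟨x, v⟩ hv ⟨x', v'⟩ hv' (rfl : x = x')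
      have : range (fun i => e (v i)) = range (fun i => e (v' i)) := by
        change range (e ∘ v) = range (e ∘ v')
        rw [range_comp, range_comp]
        congr 1
        apply Subset.antisymm
        · rintro _ ⟨i, rfl⟩; exact hrange _ _ hv' _ (hv.2 i)
        · rintro _ ⟨i, rfl⟩; exact hrange _ _ hv _ (hv'.2 i)
      have := (StrictMono.range_inj hv.1 hv'.1).1 this
      congr 1
      funext i
      exact hinj (congrFun this i)
    have h2 := ih (P ∩ {p | p.1 ∉ T}) (hP.inter (hT.compl.preimage measurable_fst)) (by
      intro x S hS
      by_contra! hlt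
      have h1 := hk x S (fun y hy => (hS y hy).1)
      have hc : S.card = k + 1 := by omega
      obtain ⟨v, hv, hvS⟩ := topk_exists hinj S
      have hne : S.Nonempty := Finset.card_pos.1 (by omega)
      obtain ⟨y, hy⟩ := hne
      refine (hS y hy).2 ?_
      rw [hc] at v
      obtain ⟨v, hv, hvS⟩ : ∃ v : Fin (k+1) → Y, StrictMono (fun i => e (v i)) ∧ ∀ i, v i ∈ S := by
        rw [← hc]; exact topk_exists hinj S
      exact ⟨(x, v), ⟨hv, fun i => (hS _ (hvS i)).1⟩, rfl⟩)
    convert hT.union h2 using 1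
    ext x
    simp only [mem_ofPred_eq, mem_union, mem_inter_iff]
    constructor
    · rintro ⟨y, hy⟩
      by_cases hx : x ∈ T
      · exact Or.inl hx
      · exact Or.inr ⟨y, hy, hx⟩
    · rintro (⟨⟨x', v⟩, hv, rfl⟩ | ⟨y, hy, -⟩)
      · exact ⟨v 0, hv.2 0⟩
      · exact ⟨y, hy⟩

lemma meas_ex {X Y : Type*} [MeasurableSpace X] [StandardBorelSpace X] [MeasurableSpace Y]
    [StandardBorelSpace Y] (P : X → Y → Prop) (hP : MeasurableSet {p : X × Y | P p.1 p.2})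
    (hfin : ∀ x, {y | P x y}.Finite) : MeasurableSet {x | ∃ y, P x y} := by
  classical
  let := upgradeStandardBorel X
  obtain ⟨e, he⟩ := MeasureTheory.exists_measurableEmbedding_real Y
  have hinj := he.injective
  let Q : Set (X × Y) := {p : X × Y | P p.1 p.2}
  let E : ℕ → Set X := fun k => Prod.fst '' topk e Q k
  have hE : ∀ k, AnalyticSet (E k) := fun k =>
    (topk_meas he.measurable hP k).analyticSet_image measurable_fst
  have hEe : ⋂ k, E k = ∅ := by
    rw [eq_empty_iff_forall_notMem]
    intro x hx
    rw [mem_iInter] at hx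
    obtain ⟨⟨x', v⟩, hv, hxx⟩ := hx ((hfin x).toFinset.card + 1)
    dsimp only at hxx
    obtain rfl : x = x' := hxx.symm
    have hvi : Function.Injective v := fun i j h => hv.1.injective (by simp [h])
    have : (Finset.univ.image v).card ≤ (hfin x).toFinset.card := by
      apply Finset.card_le_card
      intro y hy
      simp only [Finset.mem_image, Finset.mem_univ, true_and] at hy
      obtain ⟨i, rfl⟩ := hy
      exact (hfin x).mem_toFinset.2 (hv.2 i : P x (v i))
    rw [Finset.card_image_of_injective _ hvi] at this
    simp at this
  obtain ⟨B, hB, hEB, hBe⟩ := novikov E hE hEe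
  have h1 : ∀ k, MeasurableSet {x | ∃ y, (x, y) ∈ Q ∩ {p | p.1 ∉ B k}} := by
    intro k
    refine bdd_LN k _ (hP.inter ((hB k).compl.preimage measurable_fst)) ?_
    intro x S hS
    by_contra! hlt
    obtain ⟨S', hS'S, hS'c⟩ := Finset.exists_subset_card_eq hlt.le
    obtain ⟨v, hv, hvS⟩ : ∃ v : Fin k → Y, StrictMono (fun i => e (v i)) ∧ ∀ i, v i ∈ S' := by
      rw [← hS'c]; exact topk_exists hinj S'
    obtain ⟨y, hy⟩ : S.Nonempty := Finset.card_pos.1 (by omega)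
    exact (hS y hy).2 (hEB k ⟨(x, v), ⟨hv, fun i => (hS _ (hS'S (hvS i))).1⟩, rfl⟩)
  convert MeasurableSet.iUnion h1 using 1
  ext x
  simp only [mem_ofPred_eq, mem_iUnion, mem_inter_iff]
  constructor
  · rintro ⟨y, hy⟩
    have : ∃ k, x ∉ B k := by
      by_contra! hall
      have : x ∈ ⋂ n, B n := mem_iInter.2 hall
      rw [hBe] at this; exact this
    obtain ⟨k, hk⟩ := this
    exact ⟨k, y, hy, hk⟩
  · rintro ⟨k, y, hy, -⟩
    exact ⟨y, hy⟩

lemma meas_all {X Y : Type*} [MeasurableSpace X] [StandardBorelSpace X] [MeasurableSpace Y]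
    [StandardBorelSpace Y] (P Q : X → Y → Prop) (hP : MeasurableSet {p : X × Y | P p.1 p.2})
    (hQ : MeasurableSet {p : X × Y | Q p.1 p.2})
    (hfin : ∀ x, {y | P x y}.Finite) : MeasurableSet {x | ∀ y, P x y → Q x y} := by
  have := (meas_ex (fun x y => P x y ∧ ¬ Q x y) (hP.inter hQ.compl)
    (fun x => (hfin x).subset fun y hy => hy.1)).compl
  convert this using 1
  ext x
  simp

/-- distance at most r -/
def Rch {X : Type*} (G : SimpleGraph X) (r : ℕ) (x y : X) : Prop :=
  ∃ p : G.Walk x y, p.length ≤ r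

section comb
variable {X : Type*} {G : SimpleGraph X}

lemma Rch.refl (r : ℕ) (x : X) : Rch G r x x := ⟨SimpleGraph.Walk.nil, by simp⟩

lemma Rch.symm {r : ℕ} {x y : X} (h : Rch G r x y) : Rch G r y x := by
  obtain ⟨p, hp⟩ := h
  exact ⟨p.reverse, by simpa using hp⟩

lemma Rch.trans {r s : ℕ} {x y z : X} (h : Rch G r x y) (h' : Rch G s y z) :
    Rch G (r + s) x z := by
  obtain ⟨p, hp⟩ := h
  obtain ⟨q, hq⟩ := h'
  exact ⟨p.append q, by rw [SimpleGraph.Walk.length_append]; omega⟩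

lemma Rch.mono {r s : ℕ} {x y : X} (h : Rch G r x y) (hrs : r ≤ s) : Rch G s x y := by
  obtain ⟨p, hp⟩ := h
  exact ⟨p, hp.trans hrs⟩

lemma Rch.of_adj {x y : X} (h : G.Adj x y) : Rch G 1 x y := ⟨h.toWalk, by simp⟩

lemma Rch_zero {x y : X} : Rch G 0 x y ↔ x = y := by
  constructor
  · rintro ⟨p, hp⟩
    exact SimpleGraph.Walk.eq_of_length_eq_zero (Nat.le_zero.1 hp)
  · rintro rfl; exact Rch.refl _ _

lemma Rch_succ {r : ℕ} {x y : X} :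
    Rch G (r + 1) x y ↔ Rch G r x y ∨ ∃ z, G.Adj x z ∧ Rch G r z y := by
  constructor
  · rintro ⟨p, hp⟩
    cases p with
    | nil => exact Or.inl (Rch.refl _ _)
    | cons h q => exact Or.inr ⟨_, h, q, by simpa using hp⟩
  · rintro (h | ⟨z, h, h'⟩)
    · exact h.mono (by omega)
    · exact ((Rch.of_adj h).trans h').mono (by omega)

lemma Rch_finite (hfin : ∀ x, (G.neighborSet x).Finite) (r : ℕ) (x : X) :
    {y | Rch G r x y}.Finite := by
  induction r generalizing x with
  | zero => simp only [Rch_zero]; exact (finite_singleton x).subset (by rintro y rfl; rfl)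
  | succ r ih =>
    simp only [Rch_succ]
    refine ((ih x).union ((hfin x).biUnion fun z _ => ih z)).subset ?_
    rintro y (h | ⟨z, h, h'⟩)
    · exact Or.inl h
    · exact Or.inr (mem_biUnion h h')

/-- open neighborhood -/
def nb (G : SimpleGraph X) (F : Set X) : Set X := {y | ∃ x ∈ F, G.Adj x y}

lemma nb_finite (hfin : ∀ x, (G.neighborSet x).Finite) (F : Finset X) : (nb G F).Finite := by
  refine (F.finite_toSet.biUnion fun x _ => hfin x).subset ?_
  rintro y ⟨x, hx, h⟩
  exact mem_biUnion hx h

def Conn2 (G : SimpleGraph X) (F : Finset X) : Prop :=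
  ∀ S ⊆ F, S.Nonempty → S ≠ F → ∃ a ∈ S, ∃ b ∈ F, b ∉ S ∧ ∃ z, G.Adj a z ∧ G.Adj b z

def HallOn (G : SimpleGraph X) (U : Set X) : Prop :=
  ∀ F : Finset X, (F : Set X) ⊆ U → F.card ≤ (nb G F ∩ U).ncard

def HInv (G : SimpleGraph X) (U : Set X) (f : ℕ) (ε : ℝ) : Prop :=
  ∀ F : Finset X, (F : Set X) ⊆ U → Conn2 G F → F.card ≤ (nb G F ∩ U).ncard ∧
    (f ≤ F.card → (1 + ε) * F.card ≤ (nb G F ∩ U).ncard)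

lemma HInv.hall (hfin : ∀ x, (G.neighborSet x).Finite) {U : Set X} {f : ℕ} {ε : ℝ}
    (h : HInv G U f ε) : HallOn G U := by
  classical
  intro F
  induction F using Finset.strongInduction with
  | H F ih =>
    intro hF
    by_cases hc : Conn2 G F
    · exact (h F hF hc).1
    · unfold Conn2 at hc
      push Not at hc
      obtain ⟨S, hSF, hSn, hSne, hS⟩ := hc
      have hss : S ⊂ F := lt_of_le_of_ne hSF hSne
      have hss' : F \ S ⊂ F := Finset.sdiff_ssubset hSF hSn
      have h1 := ih S hss (subset_trans (by exact_mod_cast hSF) hF)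
      have h2 := ih (F \ S) hss' (subset_trans (by exact_mod_cast hss'.1) hF)
      have hd : Disjoint (nb G S ∩ U) (nb G (F \ S : Finset X) ∩ U) := by
        rw [Set.disjoint_left]
        rintro y ⟨⟨a, ha, hay⟩, -⟩ ⟨⟨b, hb, hby⟩, -⟩
        simp only [Finset.coe_sdiff, mem_sdiff, SetLike.mem_coe] at hb ha
        exact hS a ha b hb.1 hb.2 y hay hby
      have hsub : (nb G S ∩ U) ∪ (nb G (F \ S : Finset X) ∩ U) ⊆ nb G F ∩ U := by
        rintro y (⟨⟨a, ha, hay⟩, hyU⟩ | ⟨⟨a, ha, hay⟩, hyU⟩)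
        · exact ⟨⟨a, hSF ha, hay⟩, hyU⟩
        · exact ⟨⟨a, hss'.1 ha, hay⟩, hyU⟩
      have h3 := ncard_le_ncard hsub ((nb_finite hfin F).inter_of_left U)
      rw [ncard_union_eq hd ((nb_finite hfin S).inter_of_left U)
        ((nb_finite hfin _).inter_of_left U)] at h3
      have := Finset.card_sdiff_add_card_eq_card hSF
      omega

lemma HallOn.edge (hfin : ∀ x, (G.neighborSet x).Finite) {B₀ B₁ : Set X}
    (hdisj : Disjoint B₀ B₁)
    (hbip : ∀ x y : X, G.Adj x y → (x ∈ B₀ ∧ y ∈ B₁) ∨ (x ∈ B₁ ∧ y ∈ B₀))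
    {U : Set X} (h : HallOn G U) (x : X) (hx : x ∈ U) :
    ∃ y ∈ U, G.Adj x y ∧ HallOn G (U \ {x, y}) := by
  classical
  let H : SimpleGraph U := G.induce U
  have hHfin : ∀ x : U, (H.neighborSet x).Finite := fun x =>
    ((hfin x).preimage (Subtype.val_injective.injOn)).subset (fun y hy => by simpa [H] using hy)
  have : ∀ x : U, Fintype (H.neighborSet x) := fun x => (hHfin x).fintype
  have hB : H.IsBipartiteWith (Subtype.val ⁻¹' B₀) (Subtype.val ⁻¹' B₁) := by
    refine ⟨hdisj.preimage _, ?_⟩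
    intro a b hab
    exact hbip a b hab
  obtain ⟨M, hM⟩ : ∃ M : SimpleGraph.Subgraph H, M.IsPerfectMatching := by
    refine SimpleGraph.exists_isPerfectMatching_of_forall_ncard_le hB ?_
    intro s
    by_cases hs : s.Finite
    · have h1 := h (hs.toFinset.map (Function.Embedding.subtype _)) (by intro z; simp; tauto)
      rw [Finset.card_map, ← ncard_eq_toFinset_card s hs] at h1
      refine h1.trans (le_of_eq ?_)
      rw [← ncard_image_of_injective (⋃ x ∈ s, H.neighborSet x) Subtype.val_injective]
      congr 1
      ext y
      simp [nb, H]
      tauto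
    · rw [Set.Infinite.ncard hs]; exact Nat.zero_le _
  rw [SimpleGraph.Subgraph.isPerfectMatching_iff] at hM
  choose m hm hmu using hM
  have hmm : ∀ v, m (m v) = v := fun v => (hmu _ _ (hm v).symm).symm
  refine ⟨m ⟨x, hx⟩, (m ⟨x, hx⟩).2, (hm ⟨x, hx⟩).adj_sub, ?_⟩
  intro F hF
  have hFU : ∀ z ∈ F, z ∈ U := fun z hz => (hF hz).1
  rw [← Finset.card_attach]
  let φ : X → X := fun z => if hz : z ∈ U then (m ⟨z, hz⟩).1 else z
  have hφ : InjOn φ F := by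
    intro a ha b hb hab
    simp only [φ, hFU a ha, hFU b hb, dif_pos] at hab
    have := congrArg m (Subtype.ext hab)
    rw [hmm, hmm] at this
    exact congrArg Subtype.val this
  rw [Finset.card_attach, ← ncard_coe_finset, ← InjOn.ncard_image hφ]
  refine ncard_le_ncard ?_ ((nb_finite hfin F).inter_of_left _)
  rintro _ ⟨z, hz, rfl⟩
  have hzU := hFU z hz
  simp only [φ, hzU, dif_pos]
  refine ⟨⟨z, hz, (hm ⟨z, hzU⟩).adj_sub⟩, (m _).2, ?_⟩
  have hzn := (hF hz).2
  simp only [mem_insert_iff, mem_singleton_iff, not_or] at hzn ⊢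
  constructor
  · intro heq
    apply hzn.2
    have : m ⟨z, hzU⟩ = ⟨x, hx⟩ := Subtype.ext heq
    rw [← this, hmm]
  · intro heq
    apply hzn.1
    have := congrArg m (Subtype.ext heq)
    rw [hmm, hmm] at this
    exact congrArg Subtype.val this

lemma Conn2.grow {F : Finset X} (hF : Conn2 G F) {u : X} (hu : u ∈ F) (r : ℕ) :
    ∃ S ⊆ F, u ∈ S ∧ (∀ v ∈ S, Rch G (2 * r) u v) ∧ (S = F ∨ r + 1 ≤ S.card) := by
  classical
  induction r with
  | zero => exact ⟨{u}, by simpa using hu, by simp, by simpa using Rch.refl 0 u, by simp⟩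
  | succ r ih =>
    obtain ⟨S, hSF, huS, hR, hS⟩ := ih
    by_cases hSe : S = F
    · exact ⟨S, hSF, huS, fun v hv => (hR v hv).mono (by omega), Or.inl hSe⟩
    · obtain ⟨a, ha, b, hb, hbS, z, haz, hbz⟩ := hF S hSF ⟨u, huS⟩ hSe
      refine ⟨insert b S, ?_, Finset.mem_insert_of_mem huS, ?_, Or.inr ?_⟩
      · exact Finset.insert_subset hb hSF
      · intro v hv
        rcases Finset.mem_insert.1 hv with rfl | hv
        · exact (((hR a ha).trans (Rch.of_adj haz)).trans (Rch.of_adj hbz.symm)).mono (by omega)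
        · exact (hR v hv).mono (by omega)
      · rw [Finset.card_insert_of_notMem hbS]
        have := hS.resolve_left hSe
        omega

lemma Conn2.count {F : Finset X} (hF : Conn2 G F) {T : Finset X} (hT : T ⊆ F) (r : ℕ)
    (hsep : ∀ a ∈ T, ∀ b ∈ T, Rch G (4 * r) a b → a = b) (h2 : 2 ≤ T.card) :
    T.card * (r + 1) ≤ F.card := by
  classical
  have : ∀ u ∈ T, ∃ S ⊆ F, (∀ v ∈ S, Rch G (2 * r) u v) ∧ r + 1 ≤ S.card := by
    intro u hu
    obtain ⟨S, hSF, huS, hR, hS⟩ := hF.grow (hT hu) r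
    refine ⟨S, hSF, hR, hS.resolve_left ?_⟩
    rintro rfl
    obtain ⟨w, hw, hwu⟩ := Finset.exists_mem_ne (by omega : 1 < T.card) u
    exact hwu (hsep u hu w hw ((hR w (hT hw)).mono (by omega))).symm
  choose! S hSF hR hS using this
  have hdisj : (T : Set X).PairwiseDisjoint S := by
    intro a ha b hb hab
    rw [Function.onFun, Finset.disjoint_left]
    intro v hva hvb
    exact hab (hsep a ha b hb (((hR a ha v hva).trans (hR b hb v hvb).symm).mono (by omega)))
  calc T.card * (r + 1) ≤ ∑ u ∈ T, (S u).card := by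
        rw [← smul_eq_mul]; exact Finset.card_nsmul_le_sum _ _ _ hS
    _ = (T.biUnion S).card := (Finset.card_biUnion hdisj).symm
    _ ≤ F.card := Finset.card_le_card (Finset.biUnion_subset.2 hSF)

/-- Step lemma. -/
lemma HInv.step (hfin : ∀ x, (G.neighborSet x).Finite) {U A : Set X} {f0 f : ℕ} {ε : ℝ}
    (hInv : HInv G U f0 ε) (hff : f0 ≤ f) (hf : 0 < f) (hε : 0 ≤ ε) (hfε : 2 ≤ ε / 2 * f)
    (hA : ∀ x ∈ A, ∀ y ∈ A, Rch G (4 * f) x y → x = y) (p : X → X)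
    (hp : ∀ a ∈ A ∩ U, G.Adj a (p a))
    (hsmall : ∀ a ∈ A ∩ U, ∀ F : Finset X, (F : Set X) ⊆ U \ {a, p a} → F.card < f →
      (∀ v ∈ F, Rch G (2 * f + 2) a v) → F.card ≤ (nb G F ∩ (U \ {a, p a})).ncard)
    {U' : Set X} (hU' : U' = {z ∈ U | ∀ a ∈ A ∩ U, z ≠ a ∧ z ≠ p a}) :
    HInv G U' f (ε / 2) := by
  classical
  intro F hF hc
  have hFU : (F : Set X) ⊆ U := fun z hz => by have := hF hz; rw [hU'] at this; exact this.1
  let Ts : Set X := {a | a ∈ A ∩ U ∧ (a ∈ nb G F ∨ p a ∈ nb G F)}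
  have hu : ∀ a ∈ Ts, ∃ u ∈ F, Rch G 2 a u := by
    rintro a ⟨haA, ⟨u, hu, hua⟩ | ⟨u, hu, hua⟩⟩
    · exact ⟨u, hu, (Rch.of_adj hua.symm).mono (by omega)⟩
    · exact ⟨u, hu, ((Rch.of_adj (hp a haA)).trans (Rch.of_adj hua.symm)).mono (by omega)⟩
  choose! u huF huR using hu
  have huinj : InjOn u Ts := by
    intro a ha b hb hab
    refine hA a ha.1.1 b hb.1.1 (((huR a ha).trans (s := 2) ?_).mono (by omega))
    rw [hab]; exact (huR b hb).symm
  have hTfin : Ts.Finite := by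
    refine Set.Finite.of_finite_image (F.finite_toSet.subset ?_) huinj
    rintro _ ⟨a, ha, rfl⟩; exact huF a ha
  let t : Finset X := hTfin.toFinset
  have ht : ∀ a, a ∈ t ↔ a ∈ Ts := fun a => hTfin.mem_toFinset
  have hsubset : nb G F ∩ U ⊆ (nb G F ∩ U') ∪ ((t : Set X) ∪ (p '' t)) := by
    rintro z ⟨hz, hzU⟩
    by_cases hzU' : z ∈ U'
    · exact Or.inl ⟨hz, hzU'⟩
    · right
      have : ∃ a ∈ A ∩ U, z = a ∨ z = p a := by
        by_contra! hcon
        apply hzU'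
        rw [hU']
        exact ⟨hzU, hcon⟩
      obtain ⟨a, ha, rfl | rfl⟩ := this
      · left; exact (ht _).2 ⟨ha, Or.inl hz⟩
      · right; exact ⟨a, (ht _).2 ⟨ha, Or.inr hz⟩, rfl⟩
  have hcard : (nb G F ∩ U).ncard ≤ (nb G F ∩ U').ncard + 2 * t.card := by
    have h1 := ncard_le_ncard hsubset (((nb_finite hfin F).inter_of_left _).union
      (t.finite_toSet.union (t.finite_toSet.image p)))
    have h2 := ncard_union_le (nb G F ∩ U') ((t : Set X) ∪ (p '' t))
    have h3 := ncard_union_le (t : Set X) (p '' t)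
    have h4 := ncard_image_le (f := p) t.finite_toSet
    rw [ncard_coe_finset] at h3 h4
    omega
  have hcount : 2 ≤ t.card → t.card * f ≤ F.card := by
    intro h2
    have hci : (t.image u).card = t.card :=
      Finset.card_image_of_injOn (fun a ha b hb => huinj ((ht a).1 ha) ((ht b).1 hb))
    have := hc.count (T := t.image u) (by
      intro v hv
      obtain ⟨a, ha, rfl⟩ := Finset.mem_image.1 hv
      exact huF a ((ht a).1 ha)) (f - 1) (by
      intro v hv w hw hvw
      obtain ⟨a, ha, rfl⟩ := Finset.mem_image.1 hv
      obtain ⟨b, hb, rfl⟩ := Finset.mem_image.1 hw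
      rw [ht] at ha hb
      rw [hA a ha.1.1 b hb.1.1 ((((huR a ha).trans hvw).trans (huR b hb).symm).mono (by omega))])
      (by omega)
    rwa [hci, Nat.sub_add_cancel hf] at this
  have hbig : f ≤ F.card → (1 + ε / 2) * F.card ≤ (nb G F ∩ U').ncard := by
    intro hfF
    have h1 := (hInv F hFU hc).2 (hff.trans hfF)
    have h2 : t.card * f ≤ F.card := by
      rcases le_or_gt 2 t.card with h | h
      · exact hcount h
      · calc t.card * f ≤ 1 * f := Nat.mul_le_mul_right _ (by omega)
          _ ≤ F.card := by omega
    have h3 : ((nb G F ∩ U).ncard : ℝ) ≤ (nb G F ∩ U').ncard + 2 * t.card := by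
      exact_mod_cast hcard
    have h4 : (t.card * f : ℝ) ≤ F.card := by exact_mod_cast h2
    have h5 : (0 : ℝ) ≤ t.card := by positivity
    have h6 : 2 * (t.card : ℝ) ≤ ε / 2 * F.card := by
      calc 2 * (t.card : ℝ) ≤ (ε / 2 * f) * t.card := by gcongr
        _ = ε / 2 * (t.card * f) := by ring
        _ ≤ _ := by gcongr
    linarith
  refine ⟨?_, hbig⟩
  rcases le_or_gt f F.card with h | h
  · have h1 := hbig h
    have h2 : (0 : ℝ) ≤ ε / 2 * F.card := by positivity
    have : (F.card : ℝ) ≤ (nb G F ∩ U').ncard := by linarith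
    exact_mod_cast this
  · have ht2 : t.card < 2 := by
      by_contra! h2
      have h3 := hcount h2
      nlinarith
    rcases Nat.lt_or_ge t.card 1 with h0 | h0
    · have := (hInv F hFU hc).1
      omega
    · obtain ⟨a, hta⟩ := Finset.card_eq_one.1 (by omega : t.card = 1)
      have ha : a ∈ Ts := (ht a).1 (by rw [hta]; simp)
      have h1 := hsmall a ha.1 F (by
        intro z hz
        have := hF hz
        rw [hU'] at this
        have h3 := this.2 a ha.1
        refine ⟨this.1, ?_⟩
        simp [h3.1, h3.2]) h (by
        intro v hv
        obtain ⟨S, hSF, -, hR, hS⟩ := hc.grow (huF a ha) (f - 1)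
        have : S = F := by
          rcases hS with hS | hS
          · exact hS
          · have := Finset.card_le_card hSF
            omega
        rw [← this] at hv
        exact ((huR a ha).trans (hR v hv)).mono (by omega))
      refine h1.trans (ncard_le_ncard ?_ ((nb_finite hfin F).inter_of_left _))
      rintro z ⟨hz, hzU, hza⟩
      refine ⟨hz, ?_⟩
      rcases hsubset ⟨hz, hzU⟩ with h | h
      · exact h.2
      · exfalso
        apply hza
        rw [hta] at h
        simp only [Finset.coe_singleton, image_singleton, mem_union, mem_singleton_iff] at h
        simp only [mem_insert_iff, mem_singleton_iff]
        exact h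

end comb

lemma Rch_meas {X : Type*} [MeasurableSpace X] [StandardBorelSpace X] {G : SimpleGraph X}
    (hG : MeasurableSet {p : X × X | G.Adj p.1 p.2}) (hfin : ∀ x, (G.neighborSet x).Finite)
    (r : ℕ) : MeasurableSet {p : X × X | Rch G r p.1 p.2} := by
  induction r with
  | zero =>
    simp only [Rch_zero]
    exact measurableSet_eq_fun measurable_fst measurable_snd
  | succ r ih =>
    simp only [Rch_succ]
    refine MeasurableSet.union ih (meas_ex (X := X × X) (Y := X)
      (fun p z => G.Adj p.1 z ∧ Rch G r z p.2) ?_ ?_)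
    · exact (hG.preimage (f := fun q : (X × X) × X => (q.1.1, q.2)) (by fun_prop)).inter
        (ih.preimage (f := fun q : (X × X) × X => (q.2, q.1.2)) (by fun_prop))
    · intro p
      exact (hfin p.1).subset fun z hz => hz.1

lemma ballAll_meas {X : Type*} [MeasurableSpace X] [StandardBorelSpace X] {G : SimpleGraph X}
    (hG : MeasurableSet {p : X × X | G.Adj p.1 p.2}) (hfin : ∀ x, (G.neighborSet x).Finite)
    (r : ℕ) {D : Set X} (hD : MeasurableSet D) : MeasurableSet {x | ∀ y, Rch G r x y → y ∈ D} :=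
  meas_all (fun x y => Rch G r x y) (fun _ y => y ∈ D) (Rch_meas hG hfin r)
    (hD.preimage measurable_snd) (Rch_finite hfin r)

lemma exists_discrete {X : Type*} [TopologicalSpace X] [PolishSpace X]
    [MeasurableSpace X] [BorelSpace X] {G : SimpleGraph X}
    (hG : MeasurableSet {p : X × X | G.Adj p.1 p.2}) (hfin : ∀ x, (G.neighborSet x).Finite)
    (r : ℕ) : ∃ C : TopologicalSpace.countableBasis X → Set X, (∀ i, MeasurableSet (C i)) ∧
      (∀ x, ∃ i, x ∈ C i) ∧ ∀ i, ∀ x ∈ C i, ∀ y ∈ C i, Rch G r x y → x = y := by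
  refine ⟨fun V => {x | x ∈ V.1} ∩ {x | ∀ y, Rch G r x y → (y ∉ V.1 ∨ y = x)}, ?_, ?_, ?_⟩
  · intro V
    have hV : MeasurableSet V.1 := (TopologicalSpace.isOpen_of_mem_countableBasis V.2).measurableSet
    refine MeasurableSet.inter hV ?_
    refine meas_all (fun x y => Rch G r x y) (fun x y => y ∉ V.1 ∨ y = x) (Rch_meas hG hfin r)
      ?_ (Rch_finite hfin r)
    exact (hV.compl.preimage measurable_snd).union
      (measurableSet_eq_fun measurable_snd measurable_fst)
  · intro x
    have hO : IsOpen ({y | Rch G r x y} \ {x})ᶜ :=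
      ((Rch_finite hfin r x).subset sdiff_subset).isClosed.isOpen_compl
    obtain ⟨V, hV, hxV, hVs⟩ := (TopologicalSpace.isBasis_countableBasis X).exists_subset_of_mem_open
      (by simp : x ∈ ({y | Rch G r x y} \ {x})ᶜ) hO
    refine ⟨⟨V, hV⟩, hxV, ?_⟩
    intro y hy
    by_contra! hcon
    exact hVs hcon.1 ⟨hy, hcon.2⟩
  · rintro V x hx y hy hxy
    rcases hx.2 y hxy with h | h
    · exact absurd hy.1 h
    · exact h.symm

/-- the list covers y -/
def LCov {X ι : Type*} (C : ℕ → ι → Set X) (l : List ι) (y : X) : Prop :=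
  ∃ j i, l[j]? = some i ∧ y ∈ C j i

lemma LCov_exists {X ι : Type*} (C : ℕ → ι → Set X) (hcov : ∀ n x, ∃ i, x ∈ C n i) (l : List ι)
    (S : Set X) (hS : S.Finite) : ∃ t : List ι, ∀ y ∈ S, LCov C (l ++ t) y := by
  induction S, hS using Set.Finite.induction_on with
  | empty => exact ⟨[], by simp⟩
  | @insert a S ha hS ih =>
    obtain ⟨t, ht⟩ := ih
    obtain ⟨i, hi⟩ := hcov (l ++ t).length a
    refine ⟨t ++ [i], ?_⟩
    rintro y (rfl | hy)
    · refine ⟨(l ++ t).length, i, ?_, hi⟩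
      rw [← List.append_assoc]; simp
    · obtain ⟨j, i', hj, hy⟩ := ht y hy
      refine ⟨j, i', ?_, hy⟩
      rw [← List.append_assoc, List.getElem?_append_left, hj]
      exact (List.getElem?_eq_some_iff.1 hj).1

lemma generic {X ι : Type*} [TopologicalSpace X] [PolishSpace X]
    [MeasurableSpace X] [BorelSpace X] [Countable ι] [Nonempty ι] {G : SimpleGraph X}
    (hG : MeasurableSet {p : X × X | G.Adj p.1 p.2}) (hfin : ∀ x, (G.neighborSet x).Finite)
    (C : ℕ → ι → Set X) (hC : ∀ n i, MeasurableSet (C n i)) (hcov : ∀ n x, ∃ i, x ∈ C n i) :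
    ∃ s : ℕ → ι, ∀ k, {x | ∀ y, Rch G k x y → y ∈ ⋃ n, C n (s n)} ∈ residual X := by
  classical
  -- one step
  have step : ∀ (l : List ι) (U : Set X) (k : ℕ), ∃ l', l <+: l' ∧ (IsOpen U → U.Nonempty →
      ¬ IsMeagre ({x | ∀ y, Rch G k x y → LCov C l' y} ∩ U)) := by
    intro l U k
    by_contra! hcon
    have hU := (hcon l List.prefix_rfl)
    refine not_isMeagre_of_isOpen hU.1 hU.2.1 ?_
    have h1 : ∀ t : List ι, IsMeagre ({x | ∀ y, Rch G k x y → LCov C (l ++ t) y} ∩ U) :=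
      fun t => (hcon (l ++ t) (List.prefix_append _ _)).2.2
    refine (isMeagre_iUnion h1).mono ?_
    intro x hx
    obtain ⟨t, ht⟩ := LCov_exists C hcov l _ (Rch_finite hfin k x)
    exact mem_iUnion.2 ⟨t, fun y hy => ht y hy, hx⟩
  choose nxt hpre hnxt using step
  have : Nonempty (TopologicalSpace.countableBasis X × ℕ) ∨ IsEmpty X := by
    rcases isEmpty_or_nonempty X with h | ⟨⟨x⟩⟩
    · exact Or.inr h
    · obtain ⟨V, hV, -⟩ := (TopologicalSpace.isBasis_countableBasis X).exists_subset_of_mem_open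
        (mem_univ x) isOpen_univ
      exact Or.inl ⟨⟨V, hV⟩, 0⟩
  rcases this with hne | hemp
  swap
  · refine ⟨fun _ => Classical.arbitrary ι, fun k => ?_⟩
    convert Filter.univ_mem
    exact Subsingleton.elim _ _
  obtain ⟨τ, hτ⟩ := exists_surjective_nat (TopologicalSpace.countableBasis X × ℕ)
  let L : ℕ → List ι := fun n => Nat.rec [] (fun n l => nxt l (τ n).1.1 (τ n).2) n
  have L_succ : ∀ n, L (n+1) = nxt (L n) (τ n).1.1 (τ n).2 := fun n => rfl
  have hLmono : ∀ m n, m ≤ n → L m <+: L n := by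
    intro m n hmn
    induction n, hmn using Nat.le_induction with
    | base => exact List.prefix_rfl
    | succ n _ ih => exact ih.trans (by rw [L_succ]; exact hpre _ _ _)
  have hLget : ∀ (m n j : ℕ) (i i' : ι), (L m)[j]? = some i → (L n)[j]? = some i' → i = i' := by
    have aux : ∀ (m n : ℕ), m ≤ n → ∀ (j : ℕ) (i i' : ι), (L m)[j]? = some i → (L n)[j]? = some i' → i = i' := by
      intro m n hmn j i i' h h'
      obtain ⟨t, ht⟩ := hLmono m n hmn
      rw [← ht, List.getElem?_append_left (List.getElem?_eq_some_iff.1 h).1, h] at h'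
      exact Option.some.inj h'
    intro m n j i i' h h'
    rcases le_total m n with hmn | hmn
    · exact aux m n hmn j i i' h h'
    · exact (aux n m hmn j i' i h' h).symm
  let s : ℕ → ι := fun j => if h : ∃ (i : ι) (n : ℕ), (L n)[j]? = some i then h.choose else Classical.arbitrary ι
  have hs : ∀ (n j : ℕ) (i : ι), (L n)[j]? = some i → s j = i := by
    intro n j i h
    have hex : ∃ (i : ι) (n : ℕ), (L n)[j]? = some i := ⟨i, n, h⟩
    simp only [s, dif_pos hex]
    obtain ⟨n', hn'⟩ := hex.choose_spec
    exact hLget _ _ _ _ _ hn' h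
  refine ⟨s, fun k => ?_⟩
  set W : Set X := {x | ∀ y, Rch G k x y → y ∈ ⋃ n, C n (s n)} with hW
  have hWm : MeasurableSet W := ballAll_meas hG hfin k (MeasurableSet.iUnion fun n => hC n (s n))
  obtain ⟨V, hVo, hVW⟩ := hWm.compl.residualEq_isOpen
  have hVe : V = ∅ := by
    by_contra hVne
    obtain ⟨x, hx⟩ := nonempty_iff_ne_empty.2 hVne
    obtain ⟨U, hU, hxU, hUV⟩ :=
      (TopologicalSpace.isBasis_countableBasis X).exists_subset_of_mem_open hx hVo
    obtain ⟨n, hn⟩ := hτ (⟨U, hU⟩, k)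
    have h1 := hnxt (L n) U k (TopologicalSpace.isOpen_of_mem_countableBasis hU) ⟨x, hxU⟩
    apply h1
    have hLn : nxt (L n) U k = L (n+1) := by rw [L_succ, hn]
    rw [hLn]
    have hm : IsMeagre (W ∩ V) := by
      unfold IsMeagre
      filter_upwards [hVW] with z hz hzW
      have : (z ∈ Wᶜ) = (z ∈ V) := hz
      exact (this ▸ hzW.2 : z ∈ Wᶜ) hzW.1
    refine hm.mono ?_
    rintro z ⟨hz, hzU⟩
    refine ⟨fun y hy => ?_, hUV hzU⟩
    obtain ⟨j, i, hj, hyC⟩ := hz y hy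
    rw [mem_iUnion]
    refine ⟨j, ?_⟩
    rw [hs (n + 1) j i hj]; exact hyC
  rw [hVe] at hVW
  filter_upwards [hVW] with z hz
  have : (z ∈ Wᶜ) = (z ∈ (∅ : Set X)) := hz
  by_contra hcon
  exact (this ▸ (hcon : z ∈ Wᶜ) : z ∈ (∅ : Set X))

/-- Locally good edges -/
def Good {X : Type*} (G : SimpleGraph X) (U : Set X) (f : ℕ) (x y : X) : Prop :=
  (y ∈ U ∧ G.Adj x y) ∧ ∀ k : Fin f, ∀ v : Fin k → X,
    ((∀ i, Rch G (2 * f + 2) x (v i)) ∧ (∀ i, v i ∈ U ∧ v i ≠ x ∧ v i ≠ y) ∧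
      (∀ i j, v i = v j → i = j)) →
    ∃ w : Fin k → X, (∀ j, ∃ i, G.Adj (v i) (w j)) ∧ (∀ j, w j ∈ U ∧ w j ≠ x ∧ w j ≠ y) ∧
      (∀ i j, w i = w j → i = j)

lemma Good_of_hall {X : Type*} {G : SimpleGraph X} (hfin : ∀ x, (G.neighborSet x).Finite)
    {U : Set X} {f : ℕ} {x y : X} (hy : y ∈ U) (hxy : G.Adj x y) (h : HallOn G (U \ {x, y})) :
    Good G U f x y := by
  classical
  refine ⟨⟨hy, hxy⟩, ?_⟩
  rintro k v ⟨-, hvU, hv⟩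
  have h1 := h (Finset.univ.image v) (by
    intro z hz
    simp only [Finset.coe_image, Finset.coe_univ, image_univ, mem_range] at hz
    obtain ⟨i, rfl⟩ := hz
    have := hvU i
    exact ⟨this.1, by simp [this.2.1, this.2.2]⟩)
  rw [Finset.card_image_of_injective _ (fun i j => hv i j), Finset.card_univ, Fintype.card_fin] at h1
  set N := nb G ((Finset.univ.image v : Finset X) : Set X) ∩ (U \ {x, y}) with hN
  have hNf : N.Finite := (nb_finite hfin _).inter_of_left _
  rw [ncard_eq_toFinset_card N hNf] at h1
  obtain ⟨N', hN'N, hN'c⟩ := Finset.exists_subset_card_eq h1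
  let w : Fin k → X := fun j => (N'.equivFinOfCardEq hN'c).symm j
  have hw : ∀ j, w j ∈ N := fun j =>
    hNf.mem_toFinset.1 (hN'N ((N'.equivFinOfCardEq hN'c).symm j).2)
  refine ⟨w, ?_, ?_, ?_⟩
  · intro j
    obtain ⟨⟨a, ha, haw⟩, -⟩ := hw j
    simp only [Finset.coe_image, Finset.coe_univ, image_univ, mem_range] at ha
    obtain ⟨i, rfl⟩ := ha
    exact ⟨i, haw⟩
  · intro j
    obtain ⟨-, h1, h2⟩ := hw j
    simp only [mem_insert_iff, mem_singleton_iff, not_or] at h2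
    exact ⟨h1, h2⟩
  · intro i j hij
    exact (N'.equivFinOfCardEq hN'c).symm.injective (Subtype.ext hij)

lemma Good.small {X : Type*} {G : SimpleGraph X} (hfin : ∀ x, (G.neighborSet x).Finite)
    {U : Set X} {f : ℕ} {x y : X} (h : Good G U f x y) (F : Finset X)
    (hF : (F : Set X) ⊆ U \ {x, y}) (hc : F.card < f) (hR : ∀ v ∈ F, Rch G (2 * f + 2) x v) :
    F.card ≤ (nb G F ∩ (U \ {x, y})).ncard := by
  classical
  obtain ⟨w, h1, h2, h3⟩ := h.2 ⟨F.card, hc⟩ (fun i => F.equivFin.symm i) ⟨fun i => hR _ (F.equivFin.symm i).2,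
    fun i => by
      have := hF (F.equivFin.symm i).2
      refine ⟨this.1, ?_⟩
      simpa using this.2,
    fun i j hij => F.equivFin.symm.injective (Subtype.ext hij)⟩
  have : F.card = (range w).ncard := by
    rw [← image_univ, ncard_image_of_injective _ (fun i j => h3 i j), ncard_univ]
    simp
  rw [this]
  refine ncard_le_ncard ?_ ((nb_finite hfin F).inter_of_left _)
  rintro _ ⟨j, rfl⟩
  obtain ⟨i, hi⟩ := h1 j
  refine ⟨⟨_, (F.equivFin.symm i).2, hi⟩, (h2 j).1, ?_⟩
  simpa using (h2 j).2

lemma meas_and {Z : Type*} [MeasurableSpace Z] {P Q : Z → Prop} (hP : MeasurableSet {z | P z})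
    (hQ : MeasurableSet {z | Q z}) : MeasurableSet {z | P z ∧ Q z} := hP.inter hQ

lemma Good_meas {X : Type*} [MeasurableSpace X] [StandardBorelSpace X] {G : SimpleGraph X}
    (hG : MeasurableSet {p : X × X | G.Adj p.1 p.2}) (hfin : ∀ x, (G.neighborSet x).Finite)
    {U : Set X} (hU : MeasurableSet U) (f : ℕ) :
    MeasurableSet {p : X × X | Good G U f p.1 p.2} := by
  have hR := Rch_meas hG hfin (2 * f + 2)
  unfold Good
  refine meas_and ((hU.preimage measurable_snd).inter hG) ?_
  have hrw : ∀ R : (X × X) → (k : Fin f) → (Fin k → X) → Prop, {p : X × X | ∀ k v, R p k v} = ⋂ k, {p | ∀ v, R p k v} := by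
    intro R; ext p; simp
  rw [hrw]
  refine MeasurableSet.iInter fun k => ?_
  have hinj : ∀ (Z : Type _) [MeasurableSpace Z] (g : Z → Fin k → X), Measurable g →
      MeasurableSet {z | ∀ i j, g z i = g z j → i = j} := by
    intro Z _ g hg
    simp only [ofPred_forall]
    refine MeasurableSet.iInter fun i => MeasurableSet.iInter fun j => ?_
    by_cases h : i = j
    · simp [h]
    · simp only [h, imp_false]
      exact (measurableSet_eq_fun (by fun_prop) (by fun_prop)).compl
  have hmem : ∀ (Z : Type _) [MeasurableSpace Z] (g : Z → Fin k → X) (a b : Z → X), Measurable g →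
      Measurable a → Measurable b →
      MeasurableSet {z | ∀ i, g z i ∈ U ∧ g z i ≠ a z ∧ g z i ≠ b z} := by
    intro Z _ g a b hg ha hb
    simp only [ofPred_forall]
    refine MeasurableSet.iInter fun i => ?_
    exact (hU.preimage (f := fun z => g z i) (by fun_prop)).inter
      ((measurableSet_eq_fun (by fun_prop) (by fun_prop)).compl.inter
      (measurableSet_eq_fun (by fun_prop) (by fun_prop)).compl)
  refine meas_all (X := X × X) (Y := Fin k → X) _ _ ?_ ?_ ?_
  · refine meas_and ?_ (meas_and ?_ ?_)
    · simp only [ofPred_forall]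
      refine MeasurableSet.iInter fun i => ?_
      exact hR.preimage (f := fun q : (X × X) × (Fin k → X) => (q.1.1, q.2 i)) (by fun_prop)
    · exact hmem ((X × X) × (Fin k → X)) (fun q => q.2) (fun q => q.1.1) (fun q => q.1.2)
        (by fun_prop) (by fun_prop) (by fun_prop)
    · exact hinj ((X × X) × (Fin k → X)) (fun q => q.2) (by fun_prop)
  · refine meas_ex (X := (X × X) × (Fin k → X)) (Y := Fin k → X) _ ?_ ?_
    · refine meas_and ?_ (meas_and ?_ ?_)
      · simp only [ofPred_forall, ofPred_exists]
        refine MeasurableSet.iInter fun j => MeasurableSet.iUnion fun i => ?_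
        exact hG.preimage (f := fun q : ((X × X) × (Fin k → X)) × (Fin k → X) => (q.1.2 i, q.2 j))
          (by fun_prop)
      · exact hmem (((X × X) × (Fin k → X)) × (Fin k → X)) (fun q => q.2) (fun q => q.1.1.1)
          (fun q => q.1.1.2) (by fun_prop) (by fun_prop) (by fun_prop)
      · exact hinj (((X × X) × (Fin k → X)) × (Fin k → X)) (fun q => q.2) (by fun_prop)
    · intro q
      refine (Set.Finite.pi' (t := fun _ : Fin k => ⋃ i : Fin k, G.neighborSet (q.2 i))
        (fun _ => finite_iUnion fun i => hfin _)).subset ?_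
      intro w hw j
      obtain ⟨i, hi⟩ := hw.1 j
      exact mem_iUnion.2 ⟨i, hi⟩
  · intro p
    refine (Set.Finite.pi' (t := fun _ : Fin k => {z | Rch G (2 * f + 2) p.1 z})
        (fun _ => Rch_finite hfin _ _)).subset ?_
    intro v hv j
    exact hv.1 j

/-- The Borel step. -/
lemma borel_step {X : Type*} [MeasurableSpace X] [StandardBorelSpace X] {G : SimpleGraph X}
    (hG : MeasurableSet {p : X × X | G.Adj p.1 p.2}) (hfin : ∀ x, (G.neighborSet x).Finite)
    {B₀ B₁ : Set X} (hdisj : Disjoint B₀ B₁)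
    (hbip : ∀ x y : X, G.Adj x y → (x ∈ B₀ ∧ y ∈ B₁) ∨ (x ∈ B₁ ∧ y ∈ B₀))
    {U A : Set X} (hU : MeasurableSet U) (hAm : MeasurableSet A) {f0 f : ℕ} {ε : ℝ}
    (hInv : HInv G U f0 ε) (hff : f0 ≤ f) (hf : 0 < f) (hε : 0 ≤ ε) (hfε : 2 ≤ ε / 2 * f)
    (hA : ∀ x ∈ A, ∀ y ∈ A, Rch G (4 * f) x y → x = y) :
    ∃ M : Set (X × X), MeasurableSet M ∧ (∀ x y, (x, y) ∈ M → x ∈ U ∧ y ∈ U ∧ G.Adj x y) ∧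
      (∀ x y, (x, y) ∈ M → (y, x) ∈ M) ∧ (∀ x y z, (x, y) ∈ M → (x, z) ∈ M → y = z) ∧
      (∀ x ∈ A ∩ U, ∃ y, (x, y) ∈ M) ∧ MeasurableSet {x ∈ U | ∀ y, (x, y) ∉ M} ∧
      HInv G {x ∈ U | ∀ y, (x, y) ∉ M} f (ε / 2) := by
  classical
  obtain ⟨e, he⟩ := MeasureTheory.exists_measurableEmbedding_real X
  have hGm := Good_meas hG hfin hU f
  have hGfin : ∀ x, {y | Good G U f x y}.Finite := fun x => (hfin x).subset fun y hy => hy.1.2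
  have hGex : ∀ x ∈ U, ∃ y, Good G U f x y := by
    intro x hx
    obtain ⟨y, hy, hxy, h⟩ := (hInv.hall hfin).edge hfin hdisj hbip x hx
    exact ⟨y, Good_of_hall hfin hy hxy h⟩
  let E : X → X → Prop := fun x y => x ∈ A ∩ U ∧ Good G U f x y ∧ ∀ y', Good G U f x y' → e y ≤ e y'
  have hEm : MeasurableSet {p : X × X | E p.1 p.2} := by
    refine ((hAm.inter hU).preimage measurable_fst).inter (hGm.inter ?_)
    refine meas_all (X := X × X) (fun p y' => Good G U f p.1 y') (fun p y' => e p.2 ≤ e y') ?_ ?_ ?_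
    · exact hGm.preimage (f := fun q : (X × X) × X => (q.1.1, q.2)) (by fun_prop)
    · have := he.measurable
      exact measurableSet_le (by fun_prop) (by fun_prop)
    · exact fun p => hGfin p.1
  have hEu : ∀ x y z, E x y → E x z → y = z := by
    intro x y z h h'
    exact he.injective (le_antisymm (h.2.2 z h'.2.1) (h'.2.2 y h.2.1))
  have hEex : ∀ x ∈ A ∩ U, ∃ y, E x y := by
    intro x hx
    obtain ⟨y, hy, hmin⟩ := Set.exists_min_image _ e (hGfin x) (hGex x hx.2)
    exact ⟨y, hx, hy, hmin⟩
  have hEadj : ∀ x y, E x y → G.Adj x y := fun x y h => h.2.1.1.2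
  let M : Set (X × X) := {p | E p.1 p.2 ∨ E p.2 p.1}
  have hMm : MeasurableSet M := hEm.union (hEm.preimage measurable_swap)
  have hMU : ∀ x y, (x, y) ∈ M → x ∈ U ∧ y ∈ U ∧ G.Adj x y := by
    rintro x y (h | h)
    · exact ⟨h.1.2, h.2.1.1.1, hEadj _ _ h⟩
    · exact ⟨h.2.1.1.1, h.1.2, (hEadj _ _ h).symm⟩
  have key : ∀ x y z, E x y → E z x → False := by
    intro x y z h h'
    have hzx := hEadj z x h'
    have := hA z h'.1.1 x h.1.1 ((Rch.of_adj hzx).mono (by omega))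
    exact hzx.ne this
  have hU'm : MeasurableSet {x ∈ U | ∀ y, (x, y) ∉ M} := by
    refine meas_and hU ?_
    have := (meas_ex (fun x y => (x, y) ∈ M) hMm
      (fun x => (hfin x).subset fun y hy => (hMU x y hy).2.2)).compl
    convert this using 1
    ext x; simp
  refine ⟨M, hMm, hMU, ?_, ?_, ?_, hU'm, ?_⟩
  · rintro x y (h | h)
    · exact Or.inr h
    · exact Or.inl h
  · rintro x y z (h | h) (h' | h')
    · exact hEu _ _ _ h h'
    · exact (key _ _ _ h h').elim
    · exact (key _ _ _ h' h).elim
    · exact hA y h.1.1 z h'.1.1 (((Rch.of_adj (hEadj _ _ h)).trans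
        (Rch.of_adj (hEadj _ _ h').symm)).mono (by omega))
  · intro x hx
    obtain ⟨y, hy⟩ := hEex x hx
    exact ⟨y, Or.inl hy⟩
  · choose! p hp using hEex
    refine hInv.step hfin hff hf hε hfε hA p (fun a ha => hEadj _ _ (hp a ha))
      (fun a ha F hF hc hR => (hp a ha).2.1.small hfin F hF hc hR) ?_
    ext z
    constructor
    · rintro ⟨hz, h⟩
      refine ⟨hz, fun a ha => ⟨?_, ?_⟩⟩
      · rintro rfl; exact h _ (Or.inl (hp z ha))
      · rintro rfl; exact h _ (Or.inr (hp a ha))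
    · rintro ⟨hz, h⟩
      refine ⟨hz, ?_⟩
      rintro y (hy | hy)
      · exact (h z hy.1).1 rfl
      · exact (h y hy.1).2 (hEu _ _ _ hy (hp y hy.1))

end aux

lemma HInv_init {X : Type*} {G : SimpleGraph X} (hfin : ∀ x : X, (G.neighborSet x).Finite)
    {B₀ B₁ : Set X} (hcover : B₀ ∪ B₁ = Set.univ) (hdisj : Disjoint B₀ B₁)
    (hbip : ∀ x y : X, G.Adj x y → (x ∈ B₀ ∧ y ∈ B₁) ∨ (x ∈ B₁ ∧ y ∈ B₀))
    {ε : ℝ} (hε : 0 < ε)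
    (hHall : ∀ F : Finset X, ((F : Set X) ⊆ B₀ ∨ (F : Set X) ⊆ B₁) →
      (1 + ε) * (F.card : ℝ) ≤ ((graphNbhd G (F : Set X)).ncard : ℝ)) (f : ℕ) :
    HInv G Set.univ f ε := by
  classical
  have main : ∀ F : Finset X, (1 + ε) * F.card ≤ (nb G F ∩ Set.univ).ncard := by
    intro F
    rw [Set.inter_univ]
    let F0 := F.filter (· ∈ B₀)
    let F1 := F.filter (· ∉ B₀)
    have hc : F0.card + F1.card = F.card := Finset.card_filter_add_card_filter_not _
    have hF1B : ∀ x ∈ F1, x ∈ B₁ := by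
      intro x hx
      have h1 := (Finset.mem_filter.1 hx).2
      have : x ∈ B₀ ∪ B₁ := by rw [hcover]; trivial
      exact this.resolve_left h1
    have h0 := hHall F0 (Or.inl fun x hx => (Finset.mem_filter.1 hx).2)
    have h1 := hHall F1 (Or.inr hF1B)
    have hs0 : graphNbhd G F0 ⊆ nb G F := fun y ⟨_, x, hx, hxy⟩ =>
      ⟨x, (Finset.mem_filter.1 hx).1, hxy⟩
    have hs1 : graphNbhd G F1 ⊆ nb G F := fun y ⟨_, x, hx, hxy⟩ =>
      ⟨x, (Finset.mem_filter.1 hx).1, hxy⟩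
    have hd : Disjoint (graphNbhd G F0) (graphNbhd G F1) := by
      rw [Set.disjoint_left]
      rintro y ⟨-, x, hx, hxy⟩ ⟨-, x', hx', hxy'⟩
      have hx0 : x ∈ B₀ := (Finset.mem_filter.1 hx).2
      have hx1 : x' ∈ B₁ := hF1B x' hx'
      have hdd : ∀ z, z ∈ B₀ → z ∈ B₁ → False := fun z h h' => Set.disjoint_left.1 hdisj h h'
      rcases hbip x y hxy with h | h
      · rcases hbip x' y hxy' with h' | h'
        · exact hdd _ h'.1 hx1
        · exact hdd _ h'.2 h.2
      · exact hdd _ hx0 h.1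
    have hfinN := nb_finite hfin F
    have h2 := Set.ncard_le_ncard (Set.union_subset hs0 hs1) hfinN
    rw [Set.ncard_union_eq hd (hfinN.subset hs0) (hfinN.subset hs1)] at h2
    have h3 : ((graphNbhd G F0).ncard : ℝ) + (graphNbhd G F1).ncard ≤ (nb G F).ncard := by
      exact_mod_cast h2
    have h4 : (F0.card : ℝ) + F1.card = F.card := by exact_mod_cast hc
    rw [← h4]
    linarith
  intro F _ _
  refine ⟨?_, fun _ => main F⟩
  have h1 := main F
  have h2 : 0 ≤ ε * F.card := by positivity
  have : (F.card : ℝ) ≤ (nb G F ∩ Set.univ).ncard := by linarith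
  exact_mod_cast this

/-- **Theorem (Marks–Unger).** If `G` is a locally finite bipartite Borel graph on a Polish
space with bipartition `{B₀, B₁}` and there is `ε > 0` such that `|N_G(F)| ≥ (1+ε)|F|` for
every finite subset `F` of `B₀` or of `B₁`, then there is a comeager `G`-invariant Borel set
`A` such that `G ↾ A` has a Borel perfect matching. -/
theorem bairely_hall {X : Type*} [TopologicalSpace X] [PolishSpace X]
    [MeasurableSpace X] [BorelSpace X]
    (G : SimpleGraph X)
    (hGBorel : MeasurableSet {p : X × X | G.Adj p.1 p.2})
    (hlocfin : ∀ x : X, (G.neighborSet x).Finite)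
    (B₀ B₁ : Set X) (hcover : B₀ ∪ B₁ = Set.univ) (hdisj : Disjoint B₀ B₁)
    (hbip : ∀ x y : X, G.Adj x y → (x ∈ B₀ ∧ y ∈ B₁) ∨ (x ∈ B₁ ∧ y ∈ B₀))
    (ε : ℝ) (hε : 0 < ε)
    (hHall : ∀ F : Finset X, ((F : Set X) ⊆ B₀ ∨ (F : Set X) ⊆ B₁) →
      (1 + ε) * (F.card : ℝ) ≤ ((graphNbhd G (F : Set X)).ncard : ℝ)) :
    ∃ A : Set X, MeasurableSet A ∧ A ∈ residual X ∧
      (∀ x y : X, G.Adj x y → (x ∈ A ↔ y ∈ A)) ∧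
      ∃ M : Set (X × X), MeasurableSet M ∧ IsPerfectMatchingOn G A M := by
  classical
  rcases isEmpty_or_nonempty X with hemp | ⟨⟨x₀⟩⟩
  · exact ⟨Set.univ, MeasurableSet.univ, Filter.univ_mem, fun x => hemp.elim x, ∅,
      MeasurableSet.empty, fun p hp => hp.elim, fun x => hemp.elim x, fun x => hemp.elim x⟩
  let f : ℕ → ℕ := fun n => ⌈(2 : ℝ) ^ (n + 1) / ε⌉₊
  have hfpos : ∀ n, 0 < f n := fun n => Nat.ceil_pos.2 (by positivity)
  have hfmono : ∀ n, f n ≤ f (n + 1) := fun n => Nat.ceil_mono (by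
    gcongr
    · norm_num
    · omega)
  have hfε : ∀ n, 2 ≤ (ε / 2 ^ n) / 2 * (f (n + 1) : ℝ) := by
    intro n
    have h1 : (2 : ℝ) ^ (n + 1 + 1) / ε ≤ f (n + 1) := Nat.le_ceil _
    calc (2 : ℝ) = (ε / 2 ^ n) / 2 * ((2 : ℝ) ^ (n + 1 + 1) / ε) := by
          field_simp
          ring
      _ ≤ _ := by gcongr
  have hC := fun n => exists_discrete hGBorel hlocfin (4 * f (n + 1))
  choose C hCm hCcov hCsep using hC
  have : Nonempty (TopologicalSpace.countableBasis X) := ⟨(hCcov 0 x₀).choose⟩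
  obtain ⟨s, hs⟩ := generic hGBorel hlocfin C hCm hCcov
  let D : ℕ → Set X := fun n => C n (s n)
  let A : Set X := {x | ∀ k y, Rch G k x y → y ∈ ⋃ n, D n}
  have hAk : A = ⋂ k, {x | ∀ y, Rch G k x y → y ∈ ⋃ n, D n} := by
    ext x; simp [A]
  have hAm : MeasurableSet A := by
    rw [hAk]
    exact MeasurableSet.iInter fun k =>
      ballAll_meas hGBorel hlocfin k (MeasurableSet.iUnion fun n => hCm n (s n))
  have hAres : A ∈ residual X := by
    rw [hAk]
    exact countable_iInter_mem.2 hs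
  have hAimp : ∀ x y : X, G.Adj x y → x ∈ A → y ∈ A := by
    intro x y hxy hx k z hz
    exact hx (1 + k) z ((Rch.of_adj hxy).trans hz)
  have hAinv : ∀ x y : X, G.Adj x y → (x ∈ A ↔ y ∈ A) := fun x y hxy =>
    ⟨hAimp x y hxy, hAimp y x hxy.symm⟩
  have hAD : ∀ x ∈ A, ∃ n, x ∈ D n := fun x hx => Set.mem_iUnion.1 (hx 0 x (Rch.refl 0 x))
  have hstep : ∀ n (U : Set X), ∃ M : Set (X × X), MeasurableSet U ∧ HInv G U (f n) (ε / 2 ^ n) →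
      MeasurableSet M ∧ (∀ x y, (x, y) ∈ M → x ∈ U ∧ y ∈ U ∧ G.Adj x y) ∧
      (∀ x y, (x, y) ∈ M → (y, x) ∈ M) ∧ (∀ x y z, (x, y) ∈ M → (x, z) ∈ M → y = z) ∧
      (∀ x ∈ D n ∩ U, ∃ y, (x, y) ∈ M) ∧ MeasurableSet {x ∈ U | ∀ y, (x, y) ∉ M} ∧
      HInv G {x ∈ U | ∀ y, (x, y) ∉ M} (f (n + 1)) (ε / 2 ^ (n + 1)) := by
    intro n U
    by_cases h : MeasurableSet U ∧ HInv G U (f n) (ε / 2 ^ n)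
    · obtain ⟨M, hM⟩ := borel_step hGBorel hlocfin hdisj hbip h.1 (hCm n (s n)) h.2 (hfmono n)
        (hfpos (n + 1)) (by positivity) (hfε n) (hCsep n (s n))
      refine ⟨M, fun _ => ?_⟩
      rw [show ε / 2 ^ (n + 1) = ε / 2 ^ n / 2 by rw [pow_succ, div_div]]
      exact hM
    · exact ⟨∅, fun h' => absurd h' h⟩
  choose m hm using hstep
  let U : ℕ → Set X := fun n => Nat.rec Set.univ (fun n V => {x ∈ V | ∀ y, (x, y) ∉ m n V}) n
  have U_succ : ∀ n, U (n + 1) = {x ∈ U n | ∀ y, (x, y) ∉ m n (U n)} := fun n => rfl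
  have hUn : ∀ n, MeasurableSet (U n) ∧ HInv G (U n) (f n) (ε / 2 ^ n) := by
    intro n
    induction n with
    | zero =>
      refine ⟨MeasurableSet.univ, ?_⟩
      have := HInv_init hlocfin hcover hdisj hbip hε hHall (f 0)
      change HInv G Set.univ (f 0) (ε / 2 ^ 0)
      rw [pow_zero, div_one]
      exact this
    | succ n ih =>
      have := hm n (U n) ih
      rw [U_succ]
      exact ⟨this.2.2.2.2.2.1, this.2.2.2.2.2.2⟩
  have hmU := fun n => hm n (U n) (hUn n)
  have hUanti : ∀ a b, a ≤ b → U b ⊆ U a := by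
    intro a b hab
    induction b, hab using Nat.le_induction with
    | base => exact subset_rfl
    | succ n _ ih => exact fun x hx => ih (by rw [U_succ] at hx; exact hx.1)
  have hlt : ∀ a b x y z, (x, y) ∈ m a (U a) → (x, z) ∈ m b (U b) → ¬ a < b := by
    intro a b x y z h h' hab
    have h1 : x ∈ U (a + 1) := hUanti (a + 1) b hab ((hmU b).2.1 x z h').1
    rw [U_succ] at h1
    exact h1.2 y h
  refine ⟨A, hAm, hAres, hAinv, (⋃ n, m n (U n)) ∩ {p | p.1 ∈ A}, ?_, ?_, ?_, ?_⟩
  · exact (MeasurableSet.iUnion fun n => (hmU n).1).inter (hAm.preimage measurable_fst)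
  · rintro ⟨x, y⟩ ⟨hp, hx⟩
    obtain ⟨n, hn⟩ := Set.mem_iUnion.1 hp
    have hadj := ((hmU n).2.1 x y hn).2.2
    exact ⟨hx, hAimp x y hadj hx, hadj⟩
  · have aux : ∀ x y : X, (x, y) ∈ (⋃ n, m n (U n)) ∩ {p : X × X | p.1 ∈ A} →
        (y, x) ∈ (⋃ n, m n (U n)) ∩ {p : X × X | p.1 ∈ A} := by
      rintro x y ⟨hp, hx⟩
      obtain ⟨n, hn⟩ := Set.mem_iUnion.1 hp
      have hadj := ((hmU n).2.1 x y hn).2.2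
      exact ⟨Set.mem_iUnion.2 ⟨n, (hmU n).2.2.1 x y hn⟩, hAimp x y hadj hx⟩
    exact fun x y => ⟨aux x y, aux y x⟩
  · intro x hx
    have hex : ∃ n y, (x, y) ∈ m n (U n) := by
      by_contra! hcon
      have hxU : ∀ n, x ∈ U n := by
        intro n
        induction n with
        | zero => exact Set.mem_univ x
        | succ n ih => rw [U_succ]; exact ⟨ih, hcon n⟩
      obtain ⟨n, hn⟩ := hAD x hx
      obtain ⟨y, hy⟩ := (hmU n).2.2.2.2.1 x ⟨hn, hxU n⟩
      exact hcon n y hy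
    obtain ⟨n, y, hy⟩ := hex
    refine ⟨y, ⟨Set.mem_iUnion.2 ⟨n, hy⟩, hx⟩, ?_⟩
    rintro z ⟨hz, -⟩
    obtain ⟨n', hz⟩ := Set.mem_iUnion.1 hz
    obtain rfl : n = n' :=
      le_antisymm (not_lt.1 (hlt _ _ _ _ _ hz hy)) (not_lt.1 (hlt _ _ _ _ _ hy hz))
    exact (hmU n).2.2.2.1 x z y hz hy
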